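/- Let Π, Σ and K be finite types, and let p : ℕ → Π, s : ℕ → List Σ and c : ℕ → K be arbitrary sequences (the predicate symbols and symbol strings of the selected subgoals of an infinite derivation, and the clauses applied at each step). Then there exists a strictly monotone function g : ℕ → ℕ such that p(g(i)) is the same predicate symbol for all i, c(g(i)) is the same clause for all i, and s(g(i)) is a sublist of s(g(i+1)) for every i. Consequently, for every repetition number r ≥ 3 there exist indices g₁ < g₂ < … < g_r at which the same clause is applied and each atom (p(g_j), s(g_j)) loops into (p(g_{j+1}), s(g_{j+1})). -/

import Mathlib

/-- combinatorial content of the paper's Theorems 1 and 4.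
Let `P` (predicate symbols), `σ` (the alphabet of symbol strings) and `K`
(clauses) be finite types, and let `p : ℕ → P`, `s : ℕ → List σ`, `c : ℕ → K`
be arbitrary sequences.  Then there is a strictly monotone `g : ℕ → ℕ` along
which the predicate symbol is constant, the applied clause is constant, and the
symbol strings increase under the sublist (projection) order; consequently every
infinite derivation of a finite logic program exhibits, for every repetition
number `r ≥ 3`, the LP-check pattern of `r` loop goals with the same clause
applied. -/
theorem lp_check_pattern {P σ K : Type*} [Fintype P] [Fintype σ] [Fintype K]
    (p : ℕ → P) (s : ℕ → List σ) (c : ℕ → K) :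
    ∃ g : ℕ → ℕ, StrictMono g ∧
      (∀ i j : ℕ, p (g i) = p (g j)) ∧
      (∀ i j : ℕ, c (g i) = c (g j)) ∧
      (∀ i : ℕ, (s (g i)).Sublist (s (g (i + 1)))) := by
  haveI : IsPreorder (P × K) (· = ·) := { refl := fun _ => rfl, trans := fun _ _ _ => Eq.trans }
  haveI : IsPreorder σ (· = ·) := { refl := fun _ => rfl, trans := fun _ _ _ => Eq.trans }
  haveI : IsPreorder (List σ) (List.SublistForall₂ (fun a b : σ => a = b)) :=
    { refl := (List.SublistForall₂.is_refl (Rₐ := fun a b : σ => a = b)).refl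
      trans := (List.SublistForall₂.is_trans (Rₐ := fun a b : σ => a = b)).trans }
  obtain ⟨g, hg⟩ := (Finite.wellQuasiOrdered (α := P × K) (· = ·)).exists_monotone_subseq
    (fun n => (p n, c n))
  have hH := Set.PartiallyWellOrderedOn.partiallyWellOrderedOn_sublistForall₂
    (fun a b : σ => a = b) (s := Set.univ) (Set.finite_univ.partiallyWellOrderedOn)
  obtain ⟨h, hh⟩ := hH.exists_monotone_subseq (f := fun n => s (g n))
    (fun n x _ => Set.mem_univ x)
  have hc : ∀ i, (p (g i), c (g i)) = (p (g 0), c (g 0)) := fun i => (hg 0 i (Nat.zero_le i)).symm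
  refine ⟨fun n => g (h n), g.strictMono.comp h.strictMono, fun i j => ?_, fun i j => ?_,
    fun i => ?_⟩
  · exact congrArg Prod.fst ((hc (h i)).trans (hc (h j)).symm)
  · exact congrArg Prod.snd ((hc (h i)).trans (hc (h j)).symm)
  · obtain ⟨l, hl, hs⟩ := List.sublistForall₂_iff.1 (hh i (i + 1) (Nat.le_succ i))
    rw [List.forall₂_eq_eq_eq] at hl
    exact hl ▸ hs
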